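/- Let (k,′) be a differential field of characteristic zero, α, β ∈ kˣ, and Q = (α,β)_k. Let w be an element of one of the commutative subalgebras k + ku, k + kv, or k + k·uv of Q, and let d = d_{(u,v)} + ∂_w. Then (Q,d) is split by a differential field extension of (k,′) of transcendence degree at most 1 over k. -/

import Mathlib

open scoped TensorProduct

/-- A derivation on a (possibly noncommutative) ring: an additive map satisfying the
Leibniz rule. -/
structure IsRingDeriv {A : Type*} [Ring A] (d : A → A) : Prop where
  map_add : ∀ x y, d (x + y) = d x + d y
  leibniz : ∀ x y, d (x * y) = d x * y + x * d y

/-- The derivation `d` on the `k`-algebra `A` restricts to the derivation `δ` on `k`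
(along `algebraMap k A`). -/
def RestrictsTo {k A : Type*} [CommRing k] [Ring A] [Algebra k A]
    (δ : k → k) (d : A → A) : Prop :=
  ∀ c : k, d (algebraMap k A c) = algebraMap k A (δ c)

/-- The differential algebra `(Q, d)` over `(k, δk)` is split by the differential field
`(L, δL)`: there is an `L`-algebra isomorphism `L ⊗[k] Q ≃ M₂(L)` intertwining the
induced derivation `d* = δL ⊗ id + id ⊗ d` with the coordinate-wise derivation on `M₂(L)`. -/
def DiffSplits (k : Type*) [Field k] (Q : Type*) [Ring Q] [Algebra k Q]
    (d : Q → Q) (L : Type*) [Field L] [Algebra k L] (δL : L → L) : Prop :=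
  ∃ D : L ⊗[k] Q → L ⊗[k] Q,
    IsRingDeriv D ∧
    (∀ (y : L) (x : Q), D (y ⊗ₜ[k] x) = δL y ⊗ₜ[k] x + y ⊗ₜ[k] d x) ∧
    ∃ φ : (L ⊗[k] Q) ≃ₐ[L] Matrix (Fin 2) (Fin 2) L,
      ∀ z, φ (D z) = (φ z).map δL

/-- The transcendence degree of `L` over `k` is at least `n`: there are `n` algebraically
independent elements. -/
def TrdegGE (k L : Type*) [CommRing k] [CommRing L] [Algebra k L] (n : ℕ) : Prop :=
  ∃ f : Fin n → L, AlgebraicIndependent k f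

/-- The transcendence degree of `L` over `k` is at most `n`: there is no algebraically
independent family of `n + 1` elements. -/
def TrdegLE (k L : Type*) [CommRing k] [CommRing L] [Algebra k L] (n : ℕ) : Prop :=
  ∀ f : Fin (n + 1) → L, ¬ AlgebraicIndependent k f

universe u

/-!
The pairs `(v, u)` and `(uv, u)` generate `Q` as a quaternion algebra just as `(u, v)` does, and `d`
is again the standard derivation of the new pair plus `∂_w`, so we may assume `w = c₀ + c₁ u`. Then
`∂_w` kills `u` and sends `v` to `-2c₁ uv`. Choose square roots `a`, `b` of `α`, `β` in the
separable closure `K` of `k`, to which `′` extends, and extend `′` further to `K(X)` by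
`X′ = -2c₁ a X`. Over `K(X)` the assignment

  `u ↦ diag(a, -a)`, `v ↦ antidiag(b X, b X⁻¹)`

respects both the quaternion relations and the derivations.
-/

namespace IsRingDeriv

section Ring

variable {A B : Type*} [Ring A] [Ring B] {d : A → A}

theorem map_zero (hd : IsRingDeriv d) : d 0 = 0 := by
  simpa using hd.map_add 0 0

theorem map_one (hd : IsRingDeriv d) : d 1 = 0 := by
  simpa using hd.leibniz 1 1

theorem map_neg (hd : IsRingDeriv d) (x : A) : d (-x) = -d x := by
  rw [eq_neg_iff_add_eq_zero, ← hd.map_add, neg_add_cancel, hd.map_zero]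

theorem mapMatrix {n : Type*} [Fintype n] [DecidableEq n] (hd : IsRingDeriv d) :
    IsRingDeriv fun M : Matrix n n A ↦ M.map d := by
  let dHom : A →+ A := AddMonoidHom.mk' d hd.map_add
  refine ⟨fun M N ↦ Matrix.map_add d hd.map_add M N, fun M N ↦ ?_⟩
  ext i j
  calc d (∑ l, M i l * N l j) = ∑ l, d (M i l * N l j) := map_sum dHom _ _
    _ = _ := by simp [hd.leibniz, Finset.sum_add_distrib, Matrix.mul_apply]

theorem conj (hd : IsRingDeriv d) (e : B ≃+* A) : IsRingDeriv fun b ↦ e.symm (d (e b)) where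
  map_add x y := by simp [hd.map_add]
  leibniz x y := by simp [hd.leibniz]

theorem semiconj_of_adjoin_eq_top {k : Type*} [CommRing k] [Algebra k A] [Algebra k B]
    {δ : k → k} {D : B → B} (hd : IsRingDeriv d) (hdk : RestrictsTo δ d)
    (hD : IsRingDeriv D) (hDk : RestrictsTo δ D) (f : A →ₐ[k] B) {s : Set A}
    (hs : Algebra.adjoin k s = ⊤) (h : ∀ x ∈ s, f (d x) = D (f x)) :
    Function.Semiconj f d D := by
  intro x
  have hx : x ∈ Algebra.adjoin k s := hs ▸ Algebra.mem_top
  induction hx using Algebra.adjoin_induction with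
  | mem x hx => exact h x hx
  | algebraMap r => rw [hdk, f.commutes, f.commutes, hDk]
  | add x y _ _ hx hy => simp [hd.map_add, hD.map_add, hx, hy]
  | mul x y _ _ hx hy => simp [hd.leibniz, hD.leibniz, hx, hy]

end Ring

section CommRing

variable {A : Type*} [CommRing A] {δ : A → A}

/-- The `Differential` structure given by an unbundled derivation of a commutative ring; it makes
Mathlib's derivations of polynomial rings available. -/
abbrev toDifferential (hδ : IsRingDeriv δ) : Differential A where
  deriv := Derivation.mk' (AddMonoidHom.mk' δ hδ.map_add).toIntLinearMap fun x y ↦ by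
    simp [hδ.leibniz, mul_comm, add_comm]

theorem of_derivation (D : Derivation ℤ A A) : IsRingDeriv D where
  map_add := _root_.map_add D
  leibniz x y := by rw [D.leibniz, smul_eq_mul, smul_eq_mul, add_comm, mul_comm y]

open Polynomial in
theorem exists_polynomial (hδ : IsRingDeriv δ) (p : A[X]) :
    ∃ δ' : A[X] → A[X], IsRingDeriv δ' ∧ RestrictsTo δ δ' ∧ δ' X = p := by
  let _ := hδ.toDifferential
  exact ⟨Differential.implicitDeriv p, .of_derivation _, Differential.implicitDeriv_C p,
    Differential.implicitDeriv_X p⟩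

/-- The ring homomorphism `x ↦ x + δ(x)ε` into the dual numbers over an `A`-algebra `B`; extending
`δ` to `B` amounts to extending it to a section of `B[ε] → B`. -/
def toDualNumber (hδ : IsRingDeriv δ) (B : Type*) [CommRing B] [Algebra A B] :
    A →+* DualNumber B where
  toFun x := TrivSqZeroExt.inl (algebraMap A B x) + TrivSqZeroExt.inr (algebraMap A B (δ x))
  map_zero' := by simp [hδ.map_zero]
  map_one' := by simp [hδ.map_one]
  map_add' x y := by ext <;> simp [hδ.map_add, -DualNumber.inr_eq_smul_eps]
  map_mul' x y := by
    ext <;> simp [hδ.leibniz, mul_comm, add_comm, -DualNumber.inr_eq_smul_eps]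

@[simp]
theorem fst_toDualNumber (hδ : IsRingDeriv δ) (B : Type*) [CommRing B] [Algebra A B] (x : A) :
    (hδ.toDualNumber B x).fst = algebraMap A B x := by
  simp [toDualNumber]

@[simp]
theorem snd_toDualNumber (hδ : IsRingDeriv δ) (B : Type*) [CommRing B] [Algebra A B] (x : A) :
    (hδ.toDualNumber B x).snd = algebraMap A B (δ x) := by
  simp [toDualNumber, -DualNumber.inr_eq_smul_eps]

theorem of_dualNumber_section {B : Type*} [CommRing B] (σ : B →+* DualNumber B)
    (hσ : ∀ b, (σ b).fst = b) : IsRingDeriv fun b ↦ (σ b).snd where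
  map_add x y := by simp
  leibniz x y := by simp [hσ, mul_comm, add_comm]

theorem exists_extension_of_formallySmooth (hδ : IsRingDeriv δ) (B : Type*) [CommRing B]
    [Algebra A B] [Algebra.FormallySmooth A B] :
    ∃ δ' : B → B, IsRingDeriv δ' ∧ RestrictsTo δ δ' := by
  let _ : Algebra A (DualNumber B) := (hδ.toDualNumber B).toAlgebra
  let π : DualNumber B →ₐ[A] B :=
    { TrivSqZeroExt.fstHom B B B with commutes' := hδ.fst_toDualNumber B }
  have hπ : Function.Surjective π := fun b ↦ ⟨TrivSqZeroExt.inl b, rfl⟩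
  have hker : IsNilpotent (RingHom.ker (π : DualNumber B →+* B)) :=
    ⟨2, TrivSqZeroExt.kerIdeal_sq B B⟩
  let σ : B →ₐ[A] DualNumber B :=
    Algebra.FormallySmooth.liftOfSurjective (AlgHom.id A B) π hπ hker
  refine ⟨fun b ↦ (σ b).snd, of_dualNumber_section (σ : B →+* DualNumber B) fun b ↦
    Algebra.FormallySmooth.liftOfSurjective_apply (AlgHom.id A B) π hπ hker b, fun a ↦ ?_⟩
  exact (congrArg TrivSqZeroExt.snd (σ.commutes a)).trans (hδ.snd_toDualNumber B a)

end CommRing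

section Field

variable {K : Type*} [Field K] {δ : K → K}

theorem map_inv_of_eq_mul (hδ : IsRingDeriv δ) {c g : K} (hg : g ≠ 0) (h : δ g = c * g) :
    δ g⁻¹ = -(c * g⁻¹) := by
  have := hδ.leibniz g g⁻¹
  rw [mul_inv_cancel₀ hg, hδ.map_one, h] at this
  field_simp at this ⊢
  linear_combination -this

theorem map_eq_of_mul_self_eq [NeZero (2 : K)] (hδ : IsRingDeriv δ) {a x : K} (ha : a * a = x) :
    δ a = δ x / (2 * x) * a := by
  subst ha
  rcases eq_or_ne a 0 with rfl | ha
  · simp [hδ.map_zero]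
  · rw [hδ.leibniz]
    field_simp
    ring

theorem deriv_div_two_mul_neg_mul (hδ : IsRingDeriv δ) {α β : K} (hα : α ≠ 0) (hβ : β ≠ 0) :
    δ (-(α * β)) / (2 * -(α * β)) = δ α / (2 * α) + δ β / (2 * β) := by
  rw [hδ.map_neg, hδ.leibniz]
  field_simp

open scoped RatFunc in
theorem exists_ratFunc (hδ : IsRingDeriv δ) (f : K) :
    ∃ δ' : K⟮X⟯ → K⟮X⟯, IsRingDeriv δ' ∧ RestrictsTo δ δ' ∧
      δ' RatFunc.X = algebraMap K K⟮X⟯ f * RatFunc.X := by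
  obtain ⟨δP, hδP, hPK, hPX⟩ := hδ.exists_polynomial (Polynomial.C f * Polynomial.X)
  have : Algebra.FormallySmooth (Polynomial K) K⟮X⟯ :=
    .of_isLocalization (nonZeroDivisors (Polynomial K))
  obtain ⟨δ', hδ', h⟩ := hδP.exists_extension_of_formallySmooth K⟮X⟯
  refine ⟨δ', hδ', fun c ↦ ?_, ?_⟩
  · exact (h (Polynomial.C c)).trans (congrArg _ (hPK c))
  · rw [← RatFunc.algebraMap_X, h, hPX, map_mul]
    rfl

end Field

end IsRingDeriv

namespace RestrictsTo

variable {k A : Type*} [CommRing k] {δ : k → k}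

theorem trans {K : Type*} [CommRing K] [Ring A] [Algebra k K] [Algebra K A] [Algebra k A]
    [IsScalarTower k K A] {δK : K → K} {d : A → A} (h : RestrictsTo δ δK)
    (hd : RestrictsTo δK d) : RestrictsTo δ d := fun c ↦ by
  rw [IsScalarTower.algebraMap_apply k K A, hd, h, ← IsScalarTower.algebraMap_apply]

theorem mapMatrix {n : Type*} [Fintype n] [DecidableEq n] [Ring A] [Algebra k A] {d : A → A}
    (h : RestrictsTo δ d) (h0 : d 0 = 0) :
    RestrictsTo δ fun M : Matrix n n A ↦ M.map d := fun c ↦ by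
  simp [Matrix.algebraMap_eq_diagonal, Matrix.diagonal_map h0, h c]

end RestrictsTo

section Trdeg

theorem trdegLE_of_trdeg_le {k L : Type*} [CommRing k] [Nontrivial k] [CommRing L] [Algebra k L]
    {n : ℕ} (h : Algebra.trdeg k L ≤ n) : TrdegLE k L n := fun f hf ↦ by
  have := hf.lift_cardinalMk_le_trdeg.trans (Cardinal.lift_le.2 h)
  simp at this

open scoped RatFunc in
theorem trdeg_ratFunc (K : Type*) [Field K] : Algebra.trdeg K K⟮X⟯ = 1 := by
  have : Algebra.IsAlgebraic (Polynomial K) K⟮X⟯ :=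
    IsLocalization.isAlgebraic _ (nonZeroDivisors (Polynomial K))
  rw [← trdeg_add_eq K (Polynomial K), Polynomial.trdeg_of_isDomain, trdeg_eq_zero, add_zero]

theorem trdeg_eq_of_isAlgebraic (k K L : Type u) [Field k] [Field K] [Field L] [Algebra k K]
    [Algebra K L] [Algebra k L] [IsScalarTower k K L] [Algebra.IsAlgebraic k K] :
    Algebra.trdeg k L = Algebra.trdeg K L := by
  rw [← trdeg_add_eq k K, trdeg_eq_zero, zero_add]

end Trdeg

open scoped RatFunc in
theorem exists_differentialField_sqrt_exp {k : Type u} [Field k] [NeZero (2 : k)] {δk : k → k}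
    (hδk : IsRingDeriv δk) (α β c : k) :
    ∃ (L : Type u) (_ : Field L) (_ : Algebra k L) (δL : L → L) (a b g : L),
      IsRingDeriv δL ∧ RestrictsTo δk δL ∧ TrdegLE k L 1 ∧
      a * a = algebraMap k L α ∧ b * b = algebraMap k L β ∧ g ≠ 0 ∧
      δL g = algebraMap k L c * a * g := by
  let K := SeparableClosure k
  have : Algebra.FormallyEtale k K := .of_isSeparable k K
  have : NeZero (2 : K) := by simpa using NeZero.of_faithfulSMul k K 2
  obtain ⟨δK, hδK, hkK⟩ := hδk.exists_extension_of_formallySmooth K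
  obtain ⟨a, ha⟩ := IsSepClosed.exists_eq_mul_self (algebraMap k K α)
  obtain ⟨b, hb⟩ := IsSepClosed.exists_eq_mul_self (algebraMap k K β)
  obtain ⟨δL, hδL, hKL, hX⟩ := hδK.exists_ratFunc (algebraMap k K c * a)
  refine ⟨K⟮X⟯, inferInstance, inferInstance, δL, algebraMap K _ a, algebraMap K _ b, RatFunc.X,
    hδL, hkK.trans hKL, trdegLE_of_trdeg_le ?_, ?_, ?_, RatFunc.X_ne_zero, ?_⟩
  · rw [trdeg_eq_of_isAlgebraic k K, trdeg_ratFunc, Nat.cast_one]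
  · rw [← map_mul, ← ha, ← IsScalarTower.algebraMap_apply]
  · rw [← map_mul, ← hb, ← IsScalarTower.algebraMap_apply]
  · rw [hX, map_mul, ← IsScalarTower.algebraMap_apply]

/-- The elements `x`, `y` satisfy the relations `x² = α`, `y² = β`, `yx = -xy` of the standard
generators of the quaternion algebra `(α, β)_k`. -/
structure IsQuaternionPair {k A : Type*} [CommRing k] [Ring A] [Algebra k A] (α β : k)
    (x y : A) : Prop where
  mul_self_left : x * x = algebraMap k A α
  mul_self_right : y * y = algebraMap k A β
  anticomm : y * x = -(x * y)

namespace IsQuaternionPair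

section CommRing

variable {k A : Type*} [CommRing k] [Ring A] [Algebra k A] {α β : k} {x y : A}

theorem swap (h : IsQuaternionPair α β x y) : IsQuaternionPair β α y x :=
  ⟨h.mul_self_right, h.mul_self_left, by rw [h.anticomm, neg_neg]⟩

theorem mul_left (h : IsQuaternionPair α β x y) : IsQuaternionPair (-(α * β)) α (x * y) x where
  mul_self_left := calc
    x * y * (x * y) = x * (y * x) * y := by noncomm_ring
    _ = -(x * x * (y * y)) := by rw [h.anticomm]; noncomm_ring
    _ = algebraMap k A (-(α * β)) := by
      rw [h.mul_self_left, h.mul_self_right, ← map_mul, ← map_neg]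
  mul_self_right := h.mul_self_left
  anticomm := by rw [mul_assoc, h.anticomm, mul_neg, neg_neg]

theorem baseChange (h : IsQuaternionPair α β x y) (L : Type*) [CommRing L] [Algebra k L] :
    IsQuaternionPair (algebraMap k L α) (algebraMap k L β) ((1 : L) ⊗ₜ[k] x) ((1 : L) ⊗ₜ[k] y) := by
  constructor
  · simp [h.mul_self_left, Algebra.algebraMap_eq_smul_one, Algebra.TensorProduct.one_def]
  · simp [h.mul_self_right, Algebra.algebraMap_eq_smul_one, Algebra.TensorProduct.one_def]
  · simp [h.anticomm, TensorProduct.tmul_neg]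

theorem isUnit_left (h : IsQuaternionPair α β x y) (hα : IsUnit α) : IsUnit x :=
  ((Commute.refl x).isUnit_mul_iff.1 (h.mul_self_left ▸ hα.map (algebraMap k A))).1

theorem commutator_right (h : IsQuaternionPair α β x y) (c₀ c₁ : k) :
    y * (algebraMap k A c₀ + algebraMap k A c₁ * x) -
      (algebraMap k A c₀ + algebraMap k A c₁ * x) * y = algebraMap k A (-(2 * c₁)) * (x * y) := by
  simp only [Algebra.algebraMap_eq_smul_one, mul_add, add_mul, mul_smul_comm, smul_mul_assoc,
    mul_one, one_mul, h.anticomm]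
  module

/-- A pair of quaternion generators as a basis in the sense of `QuaternionAlgebra.Basis`. -/
@[simps]
def toBasis (h : IsQuaternionPair α β x y) : QuaternionAlgebra.Basis A α 0 β where
  i := x
  j := y
  k := x * y
  i_mul_i := by simp [h.mul_self_left, Algebra.algebraMap_eq_smul_one]
  j_mul_j := by simp [h.mul_self_right, Algebra.algebraMap_eq_smul_one]
  i_mul_j := rfl
  j_mul_i := by simp [h.anticomm]

end CommRing

section Field

open scoped Quaternion

variable {k A : Type*} [Field k] [NeZero (2 : k)] [Ring A] [Nontrivial A] [Algebra k A]
  {α β : k} {x y : A}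

theorem eq_zero_of_add_smul_eq_zero (h : IsQuaternionPair α β x y) (hα : α ≠ 0) (hβ : β ≠ 0)
    {p q : k} (hpq : p • (1 : A) + q • x = 0) : p = 0 ∧ q = 0 := by
  have hx := h.isUnit_left hα.isUnit
  have hy := h.swap.isUnit_left hβ.isUnit
  have anticommutator :
      y * (p • (1 : A) + q • x) + (p • (1 : A) + q • x) * y = (2 * p) • y := by
    simp only [mul_add, add_mul, mul_smul_comm, smul_mul_assoc, one_mul, mul_one, h.anticomm]
    module
  have hp : p = 0 := by
    simpa [hpq, hy.ne_zero, NeZero.ne (2 : k)] using anticommutator.symm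
  subst hp
  simpa [hx.ne_zero] using hpq

theorem liftHom_injective (h : IsQuaternionPair α β x y) (hα : α ≠ 0) (hβ : β ≠ 0) :
    Function.Injective h.toBasis.liftHom := by
  refine (injective_iff_map_eq_zero _).2 fun ⟨p, q, r, s⟩ hz ↦ ?_
  replace hz : p • (1 : A) + q • x + r • y + s • (x * y) = 0 := by
    simpa [QuaternionAlgebra.Basis.lift, Algebra.algebraMap_eq_smul_one] using hz
  have hx := h.isUnit_left hα.isUnit
  have hy := h.swap.isUnit_left hβ.isUnit
  have anticommutator : x * (p • (1 : A) + q • x + r • y + s • (x * y)) +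
      (p • (1 : A) + q • x + r • y + s • (x * y)) * x =
        (2 : k) • (x * (p • (1 : A) + q • x)) := by
    simp only [mul_add, add_mul, mul_smul_comm, smul_mul_assoc, one_mul, mul_one, h.anticomm,
      mul_assoc, mul_neg]
    module
  have commuting_part : p • (1 : A) + q • x = 0 := by
    simpa [hz, NeZero.ne (2 : k), hx.mul_right_eq_zero] using anticommutator.symm
  have anticommuting_part : r • (1 : A) + s • x = 0 := by
    refine hy.mul_left_eq_zero.1 ?_
    rw [commuting_part, zero_add] at hz
    simpa [add_mul] using hz
  obtain ⟨rfl, rfl⟩ := h.eq_zero_of_add_smul_eq_zero hα hβ commuting_part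
  obtain ⟨rfl, rfl⟩ := h.eq_zero_of_add_smul_eq_zero hα hβ anticommuting_part
  rfl

theorem liftHom_bijective (h : IsQuaternionPair α β x y) (hα : α ≠ 0) (hβ : β ≠ 0)
    (hA : Module.finrank k A = 4) : Function.Bijective h.toBasis.liftHom := by
  have : Module.Finite k A := Module.finite_of_finrank_pos (by simp [hA])
  have inj := h.liftHom_injective hα hβ
  exact ⟨inj, (LinearMap.injective_iff_surjective_of_finrank_eq_finrank
    (f := h.toBasis.liftHom.toLinearMap) (by rw [hA, QuaternionAlgebra.finrank_eq_four])).1 inj⟩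

theorem adjoin_eq_top (h : IsQuaternionPair α β x y) (hα : α ≠ 0) (hβ : β ≠ 0)
    (hA : Module.finrank k A = 4) : Algebra.adjoin k {x, y} = ⊤ := by
  rw [eq_top_iff, ← (AlgHom.range_eq_top _).2 (h.liftHom_bijective hα hβ hA).2,
    QuaternionAlgebra.Basis.range_liftHom, Algebra.adjoin_le_iff]
  rintro _ (rfl | rfl | rfl)
  · exact Algebra.subset_adjoin (by simp)
  · exact Algebra.subset_adjoin (by simp)
  · exact mul_mem (Algebra.subset_adjoin (by simp)) (Algebra.subset_adjoin (by simp))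

theorem exists_algEquiv {B : Type*} [Ring B] [Nontrivial B] [Algebra k B] {x' y' : B}
    (h : IsQuaternionPair α β x y) (h' : IsQuaternionPair α β x' y') (hα : α ≠ 0) (hβ : β ≠ 0)
    (hA : Module.finrank k A = 4) (hB : Module.finrank k B = 4) :
    ∃ φ : A ≃ₐ[k] B, φ x = x' ∧ φ y = y' := by
  let e := AlgEquiv.ofBijective _ (h.liftHom_bijective hα hβ hA)
  let e' := AlgEquiv.ofBijective _ (h'.liftHom_bijective hα hβ hB)
  have hx : e ⟨0, 1, 0, 0⟩ = x := by simp [e, QuaternionAlgebra.Basis.lift]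
  have hy : e ⟨0, 0, 1, 0⟩ = y := by simp [e, QuaternionAlgebra.Basis.lift]
  refine ⟨e.symm.trans e', ?_, ?_⟩
  · rw [AlgEquiv.trans_apply, e.symm_apply_eq.2 hx.symm]
    simp [e', QuaternionAlgebra.Basis.lift]
  · rw [AlgEquiv.trans_apply, e.symm_apply_eq.2 hy.symm]
    simp [e', QuaternionAlgebra.Basis.lift]

end Field

end IsQuaternionPair

section Splitting

variable {L : Type*} [Field L] {a b c g : L} {δ : L → L}

theorem isQuaternionPair_matrix (hg : g ≠ 0) :
    IsQuaternionPair (a * a) (b * b) !![a, 0; 0, -a] !![0, b * g; b * g⁻¹, 0] := by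
  have hbg : b * g * (b * g⁻¹) = b * b := by field_simp
  have hbg' : b * g⁻¹ * (b * g) = b * b := by field_simp
  constructor <;> ext i j <;> fin_cases i <;> fin_cases j <;>
    simp [Matrix.algebraMap_matrix_apply, hbg, hbg', mul_comm]

theorem map_deriv_diag [NeZero (2 : L)] (hδ : IsRingDeriv δ) :
    (!![a, 0; 0, -a]).map δ = (δ (a * a) / (2 * (a * a))) • !![a, 0; 0, -a] := by
  have ha := hδ.map_eq_of_mul_self_eq (a := a) rfl
  ext i j
  fin_cases i <;> fin_cases j <;> simp [hδ.map_zero, hδ.map_neg, ← ha]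

theorem map_deriv_antidiag [NeZero (2 : L)] (hδ : IsRingDeriv δ) (hg : g ≠ 0)
    (h : δ g = c * a * g) :
    (!![0, b * g; b * g⁻¹, 0]).map δ = (δ (b * b) / (2 * (b * b))) • !![0, b * g; b * g⁻¹, 0] +
      c • (!![a, 0; 0, -a] * !![0, b * g; b * g⁻¹, 0]) := by
  have hb := hδ.map_eq_of_mul_self_eq (a := b) rfl
  generalize δ (b * b) / (2 * (b * b)) = r at hb ⊢
  have hbg : δ (b * g) = r * (b * g) + c * (a * (b * g)) := by
    rw [hδ.leibniz, hb, h]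
    ring
  have hbg' : δ (b * g⁻¹) = r * (b * g⁻¹) - c * (a * (b * g⁻¹)) := by
    rw [hδ.leibniz, hb, hδ.map_inv_of_eq_mul hg h]
    ring
  ext i j
  fin_cases i <;> fin_cases j <;> simp [hδ.map_zero, hbg, hbg', sub_eq_add_neg]

end Splitting

theorem diffSplits_of_algEquiv {k Q L : Type*} [Field k] [Ring Q] [Algebra k Q] [Field L]
    [Algebra k L] {d : Q → Q} {δL : L → L} (hδL : IsRingDeriv δL)
    (φ : L ⊗[k] Q ≃ₐ[L] Matrix (Fin 2) (Fin 2) L)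
    (hφ : ∀ x, φ (1 ⊗ₜ d x) = (φ (1 ⊗ₜ x)).map δL) : DiffSplits k Q d L δL := by
  refine ⟨_, hδL.mapMatrix.conj φ.toRingEquiv, fun y x ↦ ?_, φ, fun z ↦ φ.apply_symm_apply _⟩
  refine φ.symm_apply_eq.2 ?_
  have smul_one_tmul (y : L) (x : Q) : φ (y ⊗ₜ x) = y • φ (1 ⊗ₜ x) := by
    rw [← map_smul, TensorProduct.smul_tmul', smul_eq_mul, mul_one]
  rw [map_add, smul_one_tmul _ x, smul_one_tmul _ (d x), hφ]
  change (φ (y ⊗ₜ x)).map δL = _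
  rw [smul_one_tmul]
  ext i j
  simp [hδL.leibniz]

theorem IsQuaternionPair.diffSplits {k Q L : Type*} [Field k] [NeZero (2 : k)] [Ring Q]
    [Algebra k Q] [Field L] [Algebra k L] {δ : k → k} {δL : L → L} {d : Q → Q} {α β c : k}
    {x y : Q} {a b g : L} (h : IsQuaternionPair α β x y) (hα : α ≠ 0) (hβ : β ≠ 0)
    (hQ : Module.finrank k Q = 4) (hd : IsRingDeriv d) (hdk : RestrictsTo δ d)
    (hx : d x = algebraMap k Q (δ α / (2 * α)) * x)
    (hy : d y = algebraMap k Q (δ β / (2 * β)) * y + algebraMap k Q c * (x * y))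
    (hδL : IsRingDeriv δL) (hL : RestrictsTo δ δL) (ha : a * a = algebraMap k L α)
    (hb : b * b = algebraMap k L β) (hg : g ≠ 0) (hδg : δL g = algebraMap k L c * a * g) :
    DiffSplits k Q d L δL := by
  have : Nontrivial Q := Module.nontrivial_of_finrank_pos (R := k) (by simp [hQ])
  have : NeZero (2 : L) := by simpa using NeZero.of_faithfulSMul k L 2
  have hM := isQuaternionPair_matrix (a := a) (b := b) hg
  rw [ha, hb] at hM
  obtain ⟨φ, hφx, hφy⟩ := (h.baseChange L).exists_algEquiv hM (by simpa) (by simpa)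
    (by rw [Module.finrank_baseChange, hQ]) (by simp [Module.finrank_matrix])
  let ψ : Q →ₐ[k] Matrix (Fin 2) (Fin 2) L :=
    (φ.toAlgHom.restrictScalars k).comp Algebra.TensorProduct.includeRight
  have hψx : ψ x = !![a, 0; 0, -a] := hφx
  have hψy : ψ y = !![0, b * g; b * g⁻¹, 0] := hφy
  have algebraMap_div (γ : k) :
      δL (algebraMap k L γ) / (2 * algebraMap k L γ) = algebraMap k L (δ γ / (2 * γ)) := by
    rw [map_div₀, map_mul, map_ofNat, hL]
  refine diffSplits_of_algEquiv hδL φ (hd.semiconj_of_adjoin_eq_top hdk hδL.mapMatrix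
    (hL.mapMatrix hδL.map_zero) ψ (h.adjoin_eq_top hα hβ hQ) ?_)
  rintro _ (rfl | rfl)
  · rw [hx, hψx, map_deriv_diag hδL, ha, algebraMap_div, map_mul, AlgHom.commutes, hψx,
      ← Algebra.smul_def, algebraMap_smul]
  · rw [hy, hψy, map_deriv_antidiag hδL hg hδg, hb, algebraMap_div, map_add, map_mul, map_mul,
      map_mul, AlgHom.commutes, AlgHom.commutes, hψx, hψy, ← Algebra.smul_def, ← Algebra.smul_def,
      algebraMap_smul, algebraMap_smul]

section Twist

variable {k Q : Type*} [Field k] [Ring Q] [Algebra k Q] {δ : k → k} {d : Q → Q} {α β : k}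
  {w x y : Q}

/-- On the element `x`, thought of as a square root of `α`, the map `d` is the sum of the standard
derivation `x ↦ (α′ / 2α) x` and the inner derivation `∂_w`. -/
def IsStandardTwistAt (δ : k → k) (d : Q → Q) (w : Q) (α : k) (x : Q) : Prop :=
  d x = algebraMap k Q (δ α / (2 * α)) * x + (x * w - w * x)

theorem IsStandardTwistAt.mul (hδ : IsRingDeriv δ) (hd : IsRingDeriv d) (hα : α ≠ 0) (hβ : β ≠ 0)
    (hx : IsStandardTwistAt δ d w α x) (hy : IsStandardTwistAt δ d w β y) :
    IsStandardTwistAt δ d w (-(α * β)) (x * y) := by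
  have comm (c : k) : x * (algebraMap k Q c * y) = algebraMap k Q c * (x * y) :=
    Algebra.left_comm x c y
  rw [IsStandardTwistAt, hδ.deriv_div_two_mul_neg_mul hα hβ, hd.leibniz, hx, hy, mul_add, comm,
    map_add]
  noncomm_ring

end Twist

theorem commute_algebraMap_add_mul_self {k A : Type*} [CommRing k] [Ring A] [Algebra k A]
    (c₀ c₁ : k) (x : A) : Commute x (algebraMap k A c₀ + algebraMap k A c₁ * x) :=
  (Algebra.commute_algebraMap_right c₀ x).add_right
    ((Algebra.commute_algebraMap_right c₁ x).mul_right (Commute.refl x))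

theorem IsQuaternionPair.exists_diffSplits {k : Type u} [Field k] [NeZero (2 : k)] {Q : Type*}
    [Ring Q] [Algebra k Q] {δ : k → k} {d : Q → Q} {α β : k} {w x y : Q}
    (h : IsQuaternionPair α β x y) (hα : α ≠ 0) (hβ : β ≠ 0) (hQ : Module.finrank k Q = 4)
    (hδ : IsRingDeriv δ) (hd : IsRingDeriv d) (hdk : RestrictsTo δ d)
    (hx : IsStandardTwistAt δ d w α x) (hy : IsStandardTwistAt δ d w β y)
    (hw : ∃ c₀ c₁ : k, w = algebraMap k Q c₀ + algebraMap k Q c₁ * x) :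
    ∃ (L : Type u) (_ : Field L) (_ : Algebra k L) (δL : L → L),
      IsRingDeriv δL ∧ RestrictsTo δ δL ∧ TrdegLE k L 1 ∧ DiffSplits k Q d L δL := by
  obtain ⟨c₀, c₁, rfl⟩ := hw
  rw [IsStandardTwistAt, sub_eq_zero.2 (commute_algebraMap_add_mul_self c₀ c₁ x).eq,
    add_zero] at hx
  rw [IsStandardTwistAt, h.commutator_right] at hy
  obtain ⟨L, _, _, δL, a, b, g, hδL, hL, htr, ha, hb, hg, hδg⟩ :=
    exists_differentialField_sqrt_exp hδ α β (-(2 * c₁))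
  exact ⟨L, _, _, δL, hδL, hL, htr,
    h.diffSplits hα hβ hQ hd hdk hx hy hδL hL ha hb hg hδg⟩

theorem stmt_6_general (k : Type u) [Field k] [NeZero (2 : k)]
    (δk : k → k) (hδk : IsRingDeriv δk)
    (α β : k) (hα : α ≠ 0) (hβ : β ≠ 0)
    (Q : Type*) [Ring Q] [Algebra k Q]
    (u v : Q) (huv : IsQuaternionPair α β u v) (hQ : Module.finrank k Q = 4)
    (w : Q)
    (hw : (∃ c₀ c₁ : k, w = algebraMap k Q c₀ + algebraMap k Q c₁ * u) ∨
          (∃ c₀ c₁ : k, w = algebraMap k Q c₀ + algebraMap k Q c₁ * v) ∨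
          (∃ c₀ c₁ : k, w = algebraMap k Q c₀ + algebraMap k Q c₁ * (u * v)))
    (d : Q → Q) (hd : IsRingDeriv d) (hdk : RestrictsTo δk d)
    (hdu : IsStandardTwistAt δk d w α u) (hdv : IsStandardTwistAt δk d w β v) :
    ∃ (L : Type u) (_ : Field L) (_ : Algebra k L) (δL : L → L),
      IsRingDeriv δL ∧ RestrictsTo δk δL ∧ TrdegLE k L 1 ∧ DiffSplits k Q d L δL := by
  rcases hw with hw | hw | hw
  · exact huv.exists_diffSplits hα hβ hQ hδk hd hdk hdu hdv hw
  · exact huv.swap.exists_diffSplits hβ hα hQ hδk hd hdk hdv hdu hw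
  · exact huv.mul_left.exists_diffSplits (neg_ne_zero.2 (mul_ne_zero hα hβ)) hα hQ hδk hd hdk
      (hdu.mul hδk hd hα hβ hdv) hdu hw

/-- If `w` lies in one of the commutative subalgebras `k + ku`,
`k + kv` or `k + k·uv` of the quaternion algebra `Q = (α, β)_k` and
`d = d_{(u,v)} + ∂_w`, then `(Q, d)` is split by a differential field extension of
transcendence degree at most `1` over `k`. -/
theorem stmt_6 (k : Type u) [Field k] [CharZero k]
    (δk : k → k) (hδk : IsRingDeriv δk)
    (α β : k) (hα : α ≠ 0) (hβ : β ≠ 0)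
    (Q : Type u) [Ring Q] [Algebra k Q]
    (u v : Q) (hu : u * u = algebraMap k Q α) (hv : v * v = algebraMap k Q β)
    (huv : v * u = -(u * v))
    (bQ : Module.Basis (Fin 4) k Q) (hbQ : ⇑bQ = ![1, u, v, u * v])
    (w : Q)
    (hw : (∃ c₀ c₁ : k, w = algebraMap k Q c₀ + algebraMap k Q c₁ * u) ∨
          (∃ c₀ c₁ : k, w = algebraMap k Q c₀ + algebraMap k Q c₁ * v) ∨
          (∃ c₀ c₁ : k, w = algebraMap k Q c₀ + algebraMap k Q c₁ * (u * v)))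
    (d : Q → Q) (hd : IsRingDeriv d) (hdk : RestrictsTo δk d)
    (hdu : d u = algebraMap k Q (δk α / (2 * α)) * u + (u * w - w * u))
    (hdv : d v = algebraMap k Q (δk β / (2 * β)) * v + (v * w - w * v)) :
    ∃ (L : Type u) (_ : Field L) (_ : Algebra k L) (δL : L → L),
      IsRingDeriv δL ∧ RestrictsTo δk δL ∧ TrdegLE k L 1 ∧ DiffSplits k Q d L δL := by
  have hQ : Module.finrank k Q = 4 := by simpa using Module.finrank_eq_card_basis bQ
  exact stmt_6_general k δk hδk α β hα hβ Q u v ⟨hu, hv, huv⟩ hQ w hw d hd hdk hdu hdv
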